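/- Let d ≥ 1, let r be a real number with 0 ≤ r < 1, and let μ be a locally constant distribution on ℤ_p^d with growth bounded by r, i.e. there exists C ∈ ℝ such that v_p(μ(1_{a + p^m ℤ_p^d})) ≥ C − r·m for all integers m ≥ 0 and all a ∈ ℤ_p^d. Then there exists a unique continuous E-linear functional μ̃ : C^r(ℤ_p^d, E) → E whose restriction to LC(ℤ_p^d, E) equals μ. -/

import Mathlib

/-!
Let `T_m f` be the step function sampling `f` at one point of each coset of `p^m ℤ_p^d`. For
`f ∈ C^r` we have `‖f - T_m f‖_{C^r} → 0`, so every continuous extension of `μ` to `C^r` must send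
`f` to `lim μ(T_m f)`. Conversely `T_{m+1} f - T_m f` is constant on cosets of `p^{m+1} ℤ_p^d` and
bounded by `p^{-ε_m(f)}`, so the growth condition bounds its image under `μ` by
`p^{r - C} p^{r m - ε_m(f)}`. This tends to `0`, so the limit exists because `E` is complete and
ultrametric, and the same estimate gives `‖lim μ(T_m f)‖ ≤ p^{r - C} ‖f‖_{C^r}`.
-/

open Filter Topology

/-- `p^{-ε_m(f)}`: the supremum of `‖f (x+y) - f x‖` over `x ∈ ℤ_p^d`, `y ∈ p^m ℤ_p^d`. -/
noncomputable def supDiff {p : ℕ} [Fact p.Prime] (E : Type*) [NormedField E] {d : ℕ}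
    (f : (Fin d → ℤ_[p]) → E) (m : ℕ) : ℝ :=
  ⨆ x : Fin d → ℤ_[p], ⨆ z : Fin d → ℤ_[p], ‖f (x + (p : ℤ_[p]) ^ m • z) - f x‖

/-- `f ∈ C^r(ℤ_p^d, E)`. -/
def MemCr {p : ℕ} [Fact p.Prime] (E : Type*) [NormedField E] {d : ℕ} (r : ℝ)
    (f : (Fin d → ℤ_[p]) → E) : Prop :=
  Continuous f ∧
    Tendsto (fun m : ℕ => supDiff E f m * (p : ℝ) ^ (r * (m : ℝ))) atTop (nhds 0)

/-- The norm `‖f‖_{C^r} = p^{-v_{C^r}(f)}`. -/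
noncomputable def CrNorm {p : ℕ} [Fact p.Prime] (E : Type*) [NormedField E] {d : ℕ} (r : ℝ)
    (f : (Fin d → ℤ_[p]) → E) : ℝ :=
  max (⨆ x : Fin d → ℤ_[p], ‖f x‖) (⨆ m : ℕ, supDiff E f m * (p : ℝ) ^ (r * (m : ℝ)))

/-- `Φ` is a continuous `E`-linear functional on `C^r(ℤ_p^d, E)` extending the locally
constant distribution `μ`. -/
def IsCrExtension {p : ℕ} [Fact p.Prime] (E : Type*) [NormedField E] {d : ℕ} (r : ℝ)
    (μ : LocallyConstant (Fin d → ℤ_[p]) E →ₗ[E] E) (Φ : ((Fin d → ℤ_[p]) → E) → E) : Prop :=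
  (∀ g : LocallyConstant (Fin d → ℤ_[p]) E, Φ ⇑g = μ g) ∧
  (∀ f g : (Fin d → ℤ_[p]) → E, MemCr E r f → MemCr E r g → Φ (f + g) = Φ f + Φ g) ∧
  (∀ (c : E) (f : (Fin d → ℤ_[p]) → E), MemCr E r f → Φ (c • f) = c • Φ f) ∧
  (∃ K : ℝ, ∀ f : (Fin d → ℤ_[p]) → E, MemCr E r f → ‖Φ f‖ ≤ K * CrNorm E r f)

section Sampling

variable {X R : Type*} [TopologicalSpace X] [Semiring R]

/-- The step function taking on each class of `Q` the value of `f` at the representative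
`Quotient.out`, as a linear function of `f`. For the reduction of `ℤ_p^d` modulo `p^m` this is the
level `m` approximation of `f`. -/
noncomputable def sampling (Q : DiscreteQuotient X) : (X → R) →ₗ[R] LocallyConstant X R where
  toFun f := ⟨fun x => f (Q.proj x).out, Q.proj_isLocallyConstant.comp fun c => f c.out⟩
  map_add' _ _ := rfl
  map_smul' _ _ := rfl

theorem sampling_apply (Q : DiscreteQuotient X) (f : X → R) (x : X) :
    sampling Q f x = f (Q.proj x).out :=
  rfl

theorem rel_proj_out (Q : DiscreteQuotient X) (x : X) : Q.toSetoid x (Q.proj x).out :=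
  Q.symm _ _ (Quotient.mk_out x)

theorem le_discreteQuotient_sampling (Q : DiscreteQuotient X) (f : X → R) :
    Q ≤ (sampling Q f).discreteQuotient := fun x y hxy => by
  change sampling Q f x = sampling Q f y
  rw [sampling_apply, sampling_apply, show Q.proj x = Q.proj y from Quotient.sound hxy]

theorem le_discreteQuotient_sub {Y : Type*} [Sub Y] {Q : DiscreteQuotient X}
    {g h : LocallyConstant X Y} (hg : Q ≤ g.discreteQuotient) (hh : Q ≤ h.discreteQuotient) :
    Q ≤ (g - h).discreteQuotient := fun _ _ hxy =>
  congrArg₂ (· - ·) (hg hxy) (hh hxy)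

theorem sampling_eq_self {Q : DiscreteQuotient X} {g : LocallyConstant X R}
    (hg : Q ≤ g.discreteQuotient) : sampling Q ⇑g = g :=
  LocallyConstant.ext fun x => (hg (rel_proj_out Q x)).symm

theorem eq_sum_smul_charFn {Q : DiscreteQuotient X} [Fintype Q] {g : LocallyConstant X R}
    (hg : Q ≤ g.discreteQuotient) :
    g = ∑ c : Q, g c.out • LocallyConstant.charFn R (Q.isClopen_preimage {c}) := by
  classical
  ext x
  calc g x = g (Q.proj x).out := hg (rel_proj_out Q x)
    _ = ∑ c : Q, LocallyConstant.evalₗ R x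
          (g c.out • LocallyConstant.charFn R (Q.isClopen_preimage {c})) := by
      simp [LocallyConstant.evalₗ, LocallyConstant.coe_charFn, Set.indicator_apply]
    _ = _ := (map_sum (LocallyConstant.evalₗ R x) _ _).symm

theorem norm_map_le_of_le_discreteQuotient {E F : Type*} [CompactSpace X] [Nonempty X]
    [NormedField E] [SeminormedAddCommGroup F] [IsUltrametricDist F] [NormedSpace E F]
    (μ : LocallyConstant X E →ₗ[E] F) {Q : DiscreteQuotient X} {A B : ℝ}
    (hA : ∀ c : Q, ‖μ (LocallyConstant.charFn E (Q.isClopen_preimage {c}))‖ ≤ A)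
    {g : LocallyConstant X E} (hg : Q ≤ g.discreteQuotient) (hB : ∀ x, ‖g x‖ ≤ B) :
    ‖μ g‖ ≤ B * A := by
  have := Fintype.ofFinite Q
  obtain ⟨x⟩ := ‹Nonempty X›
  have hA0 : 0 ≤ A := (norm_nonneg _).trans (hA (Q.proj x))
  have hB0 : 0 ≤ B := (norm_nonneg _).trans (hB x)
  rw [eq_sum_smul_charFn hg, map_sum]
  refine IsUltrametricDist.norm_sum_le_of_forall_le_of_nonneg (mul_nonneg hB0 hA0) fun c _ => ?_
  rw [map_smul, norm_smul]
  exact mul_le_mul (hB _) (hA c) (norm_nonneg _) hB0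

end Sampling

section ClosedBallQuotient

/-- The partition of an ultrametric space into closed balls of radius `δ`, as a discrete quotient:
on a compact space these are cofinal among all discrete quotients. -/
def closedBallQuotient (X : Type*) [PseudoMetricSpace X] [IsUltrametricDist X] {δ : ℝ}
    (hδ : 0 < δ) : DiscreteQuotient X where
  r x y := dist x y ≤ δ
  iseqv :=
    { refl := fun x => (dist_self x).trans_le hδ.le
      symm := fun {x y} h => (dist_comm y x).trans_le h
      trans := fun {x y z} hxy hyz => (dist_triangle_max x y z).trans (max_le hxy hyz) }
  isOpen_setOfPred_rel x := by
    convert! IsUltrametricDist.isOpen_closedBall x hδ.ne' using 1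
    ext y
    rw [Metric.mem_closedBall, dist_comm]
    rfl

theorem exists_closedBallQuotient_le {X : Type*} [PseudoMetricSpace X] [IsUltrametricDist X]
    [CompactSpace X] (Q : DiscreteQuotient X) :
    ∃ (δ : ℝ) (hδ : 0 < δ), closedBallQuotient X hδ ≤ Q := by
  obtain ⟨δ, hδ, h⟩ := lebesgue_number_lemma_of_metric (isCompact_univ (X := X))
    (fun c : Q => Q.isOpen_preimage {c}) fun x _ => Set.mem_iUnion.2 ⟨Q.proj x, rfl⟩
  refine ⟨δ / 2, half_pos hδ, fun x y (hxy : dist x y ≤ δ / 2) => ?_⟩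
  obtain ⟨c, hc⟩ := h y (Set.mem_univ y)
  have hx : Q.proj x = c := hc (hxy.trans_lt (half_lt_self hδ))
  have hy : Q.proj y = c := hc (Metric.mem_ball_self hδ)
  exact Quotient.exact (hx.trans hy.symm)

end ClosedBallQuotient

section CongruenceQuotient

variable {p : ℕ} [Fact p.Prime] {d : ℕ}

theorem one_lt_natCast_prime : (1 : ℝ) < p :=
  mod_cast (Fact.out : p.Prime).one_lt

theorem natCast_prime_pos : (0 : ℝ) < p :=
  zero_lt_one.trans one_lt_natCast_prime

variable (p d) in
/-- The reduction of `ℤ_p^d` modulo `p^m`, whose classes are the cosets `a + p^m ℤ_p^d`. It is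
encoded through the distance `p^{-m}`; see `congruenceQuotient_rel_iff` for the congruence. -/
noncomputable def congruenceQuotient (m : ℕ) : DiscreteQuotient (Fin d → ℤ_[p]) :=
  closedBallQuotient _ (zpow_pos (natCast_prime_pos (p := p)) (-(m : ℤ)))

theorem congruenceQuotient_rel_iff {m : ℕ} {x y : Fin d → ℤ_[p]} :
    (congruenceQuotient p d m).toSetoid x y ↔
      ∃ z : Fin d → ℤ_[p], x = y + (p : ℤ_[p]) ^ m • z := by
  change dist x y ≤ (p : ℝ) ^ (-(m : ℤ)) ↔ _
  rw [dist_pi_le_iff (zpow_pos natCast_prime_pos _).le]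
  simp only [dist_eq_norm, PadicInt.norm_le_pow_iff_mem_span_pow, Ideal.mem_span_singleton,
    dvd_iff_exists_eq_mul_right, Classical.skolem, funext_iff, Pi.add_apply, Pi.smul_apply,
    smul_eq_mul, sub_eq_iff_eq_add']

theorem congruenceQuotient_antitone : Antitone (congruenceQuotient p d) :=
  fun m n hmn x y (hxy : dist x y ≤ (p : ℝ) ^ (-(n : ℤ))) =>
    hxy.trans (zpow_le_zpow_right₀ one_lt_natCast_prime.le (by lia))

theorem eventually_congruenceQuotient_le (Q : DiscreteQuotient (Fin d → ℤ_[p])) :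
    ∀ᶠ m in atTop, congruenceQuotient p d m ≤ Q := by
  obtain ⟨δ, hδ, hQ⟩ := exists_closedBallQuotient_le Q
  obtain ⟨N, hN⟩ := exists_pow_lt_of_lt_one hδ
    (inv_lt_one_of_one_lt₀ (one_lt_natCast_prime (p := p)))
  filter_upwards [eventually_ge_atTop N] with m hm
  refine (congruenceQuotient_antitone hm).trans (le_trans (fun x y hxy => ?_) hQ)
  replace hxy : dist x y ≤ (p : ℝ) ^ (-(N : ℤ)) := hxy
  rw [zpow_neg, zpow_natCast, ← inv_pow] at hxy
  exact hxy.trans hN.le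

end CongruenceQuotient

section SupDiff

variable {p : ℕ} [Fact p.Prime] {E : Type*} [NormedField E] {d : ℕ} {f g : (Fin d → ℤ_[p]) → E}
  {m n : ℕ}

theorem supDiff_nonneg (f : (Fin d → ℤ_[p]) → E) (m : ℕ) : 0 ≤ supDiff E f m :=
  Real.iSup_nonneg fun _ => Real.iSup_nonneg fun _ => norm_nonneg _

theorem supDiff_le {B : ℝ}
    (h : ∀ x y, (congruenceQuotient p d m).toSetoid x y → ‖f x - f y‖ ≤ B) :
    supDiff E f m ≤ B :=
  ciSup_le fun _ => ciSup_le fun z => h _ _ (congruenceQuotient_rel_iff.2 ⟨z, rfl⟩)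

theorem norm_sub_le_supDiff (hf : Continuous f) {x y : Fin d → ℤ_[p]}
    (h : (congruenceQuotient p d m).toSetoid x y) : ‖f x - f y‖ ≤ supDiff E f m := by
  obtain ⟨z, rfl⟩ := congruenceQuotient_rel_iff.1 h
  obtain ⟨B, hB⟩ := isCompact_univ.exists_bound_of_continuousOn hf.continuousOn
  have hdiff : ∀ a b, ‖f a - f b‖ ≤ B + B := fun a b =>
    (norm_sub_le _ _).trans (add_le_add (hB a trivial) (hB b trivial))
  refine le_ciSup_of_le ⟨B + B, ?_⟩ y (le_ciSup_of_le ⟨B + B, ?_⟩ z le_rfl)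
  · exact Set.forall_mem_range.2 fun a => ciSup_le fun _ => hdiff _ _
  · exact Set.forall_mem_range.2 fun _ => hdiff _ _

theorem supDiff_sub_le (hf : Continuous f) (hg : Continuous g) (m : ℕ) :
    supDiff E (f - g) m ≤ supDiff E f m + supDiff E g m :=
  supDiff_le fun x y hxy => by
    rw [Pi.sub_apply, Pi.sub_apply, sub_sub_sub_comm]
    exact (norm_sub_le _ _).trans
      (add_le_add (norm_sub_le_supDiff hf hxy) (norm_sub_le_supDiff hg hxy))

theorem supDiff_eq_zero {g : LocallyConstant (Fin d → ℤ_[p]) E}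
    (hg : congruenceQuotient p d m ≤ g.discreteQuotient) : supDiff E ⇑g m = 0 :=
  (supDiff_nonneg _ _).antisymm' <| supDiff_le fun x y hxy => by
    rw [show g x = g y from hg hxy, sub_self, norm_zero]

theorem norm_sub_sampling_le (hf : Continuous f) (m : ℕ) (x : Fin d → ℤ_[p]) :
    ‖(f - ⇑(sampling (congruenceQuotient p d m) f)) x‖ ≤ supDiff E f m :=
  norm_sub_le_supDiff hf (rel_proj_out _ x)

theorem supDiff_sub_sampling_le_self (hf : Continuous f) (hmn : m ≤ n) :
    supDiff E (f - ⇑(sampling (congruenceQuotient p d m) f)) n ≤ supDiff E f n := by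
  have h := supDiff_sub_le hf (sampling (congruenceQuotient p d m) f).continuous n
  rwa [supDiff_eq_zero ((congruenceQuotient_antitone hmn).trans
    (le_discreteQuotient_sampling _ f)), add_zero] at h

theorem supDiff_sub_sampling_le [IsUltrametricDist E] (hf : Continuous f) (m n : ℕ) :
    supDiff E (f - ⇑(sampling (congruenceQuotient p d m) f)) n ≤ supDiff E f m :=
  supDiff_le fun x y _ => by
    rw [sub_eq_add_neg]
    refine (IsUltrametricDist.norm_add_le_max _ _).trans
      (max_le (norm_sub_sampling_le hf m x) ?_)
    rw [norm_neg]
    exact norm_sub_sampling_le hf m y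

end SupDiff

section CrSpace

variable {p : ℕ} [Fact p.Prime] {E : Type*} [NormedField E] {d : ℕ} {r : ℝ}
  {f g : (Fin d → ℤ_[p]) → E}

theorem MemCr.sub (hf : MemCr E r f) (hg : MemCr E r g) : MemCr E r (f - g) := by
  refine ⟨hf.1.sub hg.1, squeeze_zero
    (fun m => mul_nonneg (supDiff_nonneg _ _) (by positivity)) (fun m => ?_)
    (by simpa only [add_zero] using hf.2.add hg.2)⟩
  rw [← add_mul]
  exact mul_le_mul_of_nonneg_right (supDiff_sub_le hf.1 hg.1 m) (by positivity)

theorem memCr_locallyConstant (r : ℝ) (g : LocallyConstant (Fin d → ℤ_[p]) E) :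
    MemCr E r ⇑g := by
  refine ⟨g.continuous, tendsto_const_nhds.congr' ?_⟩
  filter_upwards [eventually_congruenceQuotient_le g.discreteQuotient] with m hm
  rw [supDiff_eq_zero hm, zero_mul]

theorem crNorm_nonneg (r : ℝ) (f : (Fin d → ℤ_[p]) → E) : 0 ≤ CrNorm E r f :=
  le_max_of_le_left (Real.iSup_nonneg fun _ => norm_nonneg _)

theorem norm_le_crNorm (r : ℝ) (hf : Continuous f) (x : Fin d → ℤ_[p]) :
    ‖f x‖ ≤ CrNorm E r f :=
  le_max_of_le_left (le_ciSup (isCompact_range hf.norm).bddAbove x)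

theorem MemCr.supDiff_mul_rpow_le_crNorm (hf : MemCr E r f) (m : ℕ) :
    supDiff E f m * (p : ℝ) ^ (r * (m : ℝ)) ≤ CrNorm E r f :=
  le_max_of_le_right (le_ciSup hf.2.bddAbove_range m)

theorem crNorm_sub_sampling_le [IsUltrametricDist E] (hr0 : 0 ≤ r) (hf : Continuous f) {m : ℕ}
    {ε : ℝ} (hε : ∀ n, m ≤ n → supDiff E f n * (p : ℝ) ^ (r * (n : ℝ)) ≤ ε) :
    CrNorm E r (f - ⇑(sampling (congruenceQuotient p d m) f)) ≤ ε := by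
  have hp : (1 : ℝ) ≤ p := one_lt_natCast_prime.le
  refine max_le (ciSup_le fun x => ?_) (ciSup_le fun n => ?_)
  · calc ‖(f - ⇑(sampling (congruenceQuotient p d m) f)) x‖
        ≤ supDiff E f m := norm_sub_sampling_le hf m x
      _ ≤ supDiff E f m * (p : ℝ) ^ (r * (m : ℝ)) :=
        le_mul_of_one_le_right (supDiff_nonneg _ _) (Real.one_le_rpow hp (by positivity))
      _ ≤ ε := hε m le_rfl
  · rcases le_total m n with hmn | hnm
    · exact (mul_le_mul_of_nonneg_right (supDiff_sub_sampling_le_self hf hmn)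
        (by positivity)).trans (hε n hmn)
    · refine le_trans ?_ (hε m le_rfl)
      have := supDiff_nonneg f m
      gcongr
      exact supDiff_sub_sampling_le hf m n

theorem MemCr.tendsto_crNorm_sub_sampling [IsUltrametricDist E] (hr0 : 0 ≤ r)
    (hf : MemCr E r f) :
    Tendsto (fun m => CrNorm E r (f - ⇑(sampling (congruenceQuotient p d m) f)))
      atTop (𝓝 0) := by
  refine tendsto_order.2 ⟨fun a ha => .of_forall fun m => ha.trans_le (crNorm_nonneg _ _),
    fun ε hε => ?_⟩
  have hsmall := hf.2.eventually_le_const (half_pos hε)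
  filter_upwards [eventually_forall_ge_atTop.2 hsmall] with m hm
  exact (crNorm_sub_sampling_le hr0 hf.1 hm).trans_lt (half_lt_self hε)

end CrSpace

section Extension

variable {p : ℕ} [Fact p.Prime] {E : Type*} [NormedField E] {d : ℕ} {r C : ℝ}
  {μ : LocallyConstant (Fin d → ℤ_[p]) E →ₗ[E] E} {f : (Fin d → ℤ_[p]) → E}

namespace IsCrExtension

variable {Φ : ((Fin d → ℤ_[p]) → E) → E}

theorem map_sub_locallyConstant (hΦ : IsCrExtension E r μ Φ) (hf : MemCr E r f)
    (g : LocallyConstant (Fin d → ℤ_[p]) E) : Φ (f - ⇑g) = Φ f - μ g := by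
  obtain ⟨hμ, hadd, -, -⟩ := hΦ
  calc Φ (f - ⇑g) = Φ (f + ⇑(-g)) := by rw [LocallyConstant.coe_neg, sub_eq_add_neg]
    _ = Φ f - μ g := by
      rw [hadd _ _ hf (memCr_locallyConstant r _), hμ, map_neg, sub_eq_add_neg]

theorem tendsto_map_sampling [IsUltrametricDist E] (hΦ : IsCrExtension E r μ Φ) (hr0 : 0 ≤ r)
    (hf : MemCr E r f) :
    Tendsto (fun m => μ (sampling (congruenceQuotient p d m) f)) atTop (𝓝 (Φ f)) := by
  obtain ⟨K, hK⟩ := hΦ.2.2.2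
  have hlim : Tendsto (fun m => K * CrNorm E r (f - ⇑(sampling (congruenceQuotient p d m) f)))
      atTop (𝓝 0) := by
    simpa only [mul_zero] using (hf.tendsto_crNorm_sub_sampling hr0).const_mul K
  refine tendsto_iff_norm_sub_tendsto_zero.2 (squeeze_zero (fun _ => norm_nonneg _) ?_ hlim)
  intro m
  rw [norm_sub_rev, ← hΦ.map_sub_locallyConstant hf]
  exact hK _ (hf.sub (memCr_locallyConstant r _))

end IsCrExtension

/-- The distribution `μ` has growth bounded by `r`, with constant `C`:
`v_p(μ(1_{a + p^m ℤ_p^d})) ≥ C - r m` for all cosets `a + p^m ℤ_p^d`. -/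
def HasGrowthBound (μ : LocallyConstant (Fin d → ℤ_[p]) E →ₗ[E] E) (r C : ℝ) : Prop :=
  ∀ (m : ℕ) (c : congruenceQuotient p d m),
    ‖μ (LocallyConstant.charFn E ((congruenceQuotient p d m).isClopen_preimage {c}))‖ ≤
      (p : ℝ) ^ (r * (m : ℝ) - C)

theorem hasGrowthBound_of_forall_indicator
    (h : ∀ (m : ℕ) (a : Fin d → ℤ_[p]) (g : LocallyConstant (Fin d → ℤ_[p]) E),
      ⇑g = Set.indicator
          {x : Fin d → ℤ_[p] | ∃ z : Fin d → ℤ_[p], x = a + (p : ℤ_[p]) ^ m • z}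
          (fun _ => (1 : E)) →
      ‖μ g‖ ≤ (p : ℝ) ^ (r * (m : ℝ) - C)) :
    HasGrowthBound μ r C := by
  intro m c
  obtain ⟨a, rfl⟩ := (congruenceQuotient p d m).proj_surjective c
  refine h m a _ ?_
  have hcoset : (congruenceQuotient p d m).proj ⁻¹' {(congruenceQuotient p d m).proj a} =
      {x | ∃ z : Fin d → ℤ_[p], x = a + (p : ℤ_[p]) ^ m • z} := by
    ext x
    exact Quotient.eq.trans congruenceQuotient_rel_iff
  rw [LocallyConstant.coe_charFn, hcoset]
  rfl

namespace HasGrowthBound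

variable [IsUltrametricDist E]

theorem norm_map_le (hμ : HasGrowthBound μ r C) {m : ℕ}
    {g : LocallyConstant (Fin d → ℤ_[p]) E} {B : ℝ}
    (hg : congruenceQuotient p d m ≤ g.discreteQuotient) (hB : ∀ x, ‖g x‖ ≤ B) :
    ‖μ g‖ ≤ B * (p : ℝ) ^ (r * (m : ℝ) - C) :=
  norm_map_le_of_le_discreteQuotient μ (hμ m) hg hB

theorem norm_map_sampling_succ_sub_le (hμ : HasGrowthBound μ r C) (hf : Continuous f) (m : ℕ) :
    ‖μ (sampling (congruenceQuotient p d (m + 1)) f) - μ (sampling (congruenceQuotient p d m) f)‖ ≤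
      supDiff E f m * (p : ℝ) ^ (r * (m : ℝ)) * (p : ℝ) ^ (r - C) := by
  have hle : congruenceQuotient p d (m + 1) ≤ congruenceQuotient p d m :=
    congruenceQuotient_antitone m.le_succ
  rw [← map_sub, mul_assoc, ← Real.rpow_add natCast_prime_pos,
    show r * (m : ℝ) + (r - C) = r * ((m + 1 : ℕ) : ℝ) - C by push_cast; ring]
  refine hμ.norm_map_le (le_discreteQuotient_sub (le_discreteQuotient_sampling _ f)
    (hle.trans (le_discreteQuotient_sampling _ f))) fun x => norm_sub_le_supDiff hf ?_
  exact (congruenceQuotient p d m).trans _ x _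
    ((congruenceQuotient p d m).symm _ _ (hle (rel_proj_out _ x))) (rel_proj_out _ x)

theorem norm_map_sampling_le (hμ : HasGrowthBound μ r C) (hr0 : 0 ≤ r) (hf : MemCr E r f)
    (m : ℕ) :
    ‖μ (sampling (congruenceQuotient p d m) f)‖ ≤ (p : ℝ) ^ (r - C) * CrNorm E r f := by
  have hp : (1 : ℝ) ≤ p := one_lt_natCast_prime.le
  have hN : 0 ≤ CrNorm E r f := crNorm_nonneg r f
  induction m with
  | zero =>
    refine (hμ.norm_map_le (le_discreteQuotient_sampling _ f)
      fun x => norm_le_crNorm r hf.1 _).trans ?_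
    rw [mul_comm]
    gcongr
    simpa only [Nat.cast_zero, mul_zero] using hr0
  | succ m ih =>
    rw [← sub_add_cancel (μ (sampling (congruenceQuotient p d (m + 1)) f))
      (μ (sampling (congruenceQuotient p d m) f))]
    refine (IsUltrametricDist.norm_add_le_max _ _).trans
      (max_le ((hμ.norm_map_sampling_succ_sub_le hf.1 m).trans ?_) ih)
    rw [mul_comm]
    gcongr
    exact hf.supDiff_mul_rpow_le_crNorm m

end HasGrowthBound

/-- The extension of a distribution to `C^r`, as the limit of its values on the level `m`
approximations; a junk value where this limit does not exist. -/
noncomputable def crExtension (μ : LocallyConstant (Fin d → ℤ_[p]) E →ₗ[E] E)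
    (f : (Fin d → ℤ_[p]) → E) : E :=
  limUnder atTop fun m => μ (sampling (congruenceQuotient p d m) f)

theorem crExtension_locallyConstant (μ : LocallyConstant (Fin d → ℤ_[p]) E →ₗ[E] E)
    (g : LocallyConstant (Fin d → ℤ_[p]) E) : crExtension μ ⇑g = μ g := by
  refine (tendsto_const_nhds.congr' ?_).limUnder_eq
  filter_upwards [eventually_congruenceQuotient_le g.discreteQuotient] with m hm
  rw [sampling_eq_self hm]

namespace HasGrowthBound

variable [IsUltrametricDist E] [CompleteSpace E]

theorem tendsto_crExtension (hμ : HasGrowthBound μ r C) (hf : MemCr E r f) :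
    Tendsto (fun m => μ (sampling (congruenceQuotient p d m) f)) atTop
      (𝓝 (crExtension μ f)) := by
  refine tendsto_nhds_limUnder (cauchySeq_tendsto_of_complete ?_)
  refine NonarchimedeanAddGroup.cauchySeq_of_tendsto_sub_nhds_zero
    (squeeze_zero_norm (hμ.norm_map_sampling_succ_sub_le hf.1) ?_)
  simpa only [zero_mul] using hf.2.mul_const ((p : ℝ) ^ (r - C))

theorem isCrExtension_crExtension (hμ : HasGrowthBound μ r C) (hr0 : 0 ≤ r) :
    IsCrExtension E r μ (crExtension μ) := by
  refine ⟨crExtension_locallyConstant μ, fun f g hf hg => ?_, fun c f hf => ?_,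
    (p : ℝ) ^ (r - C), fun f hf => ?_⟩
  · refine Tendsto.limUnder_eq ?_
    simpa only [map_add] using (hμ.tendsto_crExtension hf).add (hμ.tendsto_crExtension hg)
  · refine Tendsto.limUnder_eq ?_
    simpa only [map_smul] using (hμ.tendsto_crExtension hf).const_smul c
  · exact le_of_tendsto (hμ.tendsto_crExtension hf).norm
      (.of_forall (hμ.norm_map_sampling_le hr0 hf))

end HasGrowthBound

end Extension

theorem stmt5_general (p : ℕ) [Fact p.Prime] (E : Type*) [NormedField E] [CompleteSpace E]
    [IsUltrametricDist E] (d : ℕ) (r : ℝ) (hr0 : 0 ≤ r)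
    (μ : LocallyConstant (Fin d → ℤ_[p]) E →ₗ[E] E)
    (C : ℝ)
    (hgrowth : ∀ (m : ℕ) (a : Fin d → ℤ_[p]) (g : LocallyConstant (Fin d → ℤ_[p]) E),
      ⇑g = Set.indicator
          {x : Fin d → ℤ_[p] | ∃ z : Fin d → ℤ_[p], x = a + (p : ℤ_[p]) ^ m • z}
          (fun _ => (1 : E)) →
      ‖μ g‖ ≤ (p : ℝ) ^ (r * (m : ℝ) - C)) :
    ∃ Φ : ((Fin d → ℤ_[p]) → E) → E, IsCrExtension E r μ Φ ∧
      ∀ Φ' : ((Fin d → ℤ_[p]) → E) → E, IsCrExtension E r μ Φ' →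
        ∀ f : (Fin d → ℤ_[p]) → E, MemCr E r f → Φ' f = Φ f := by
  have hμ : HasGrowthBound μ r C := hasGrowthBound_of_forall_indicator hgrowth
  exact ⟨crExtension μ, hμ.isCrExtension_crExtension hr0,
    fun _ hΦ' _ hf => (hΦ'.tendsto_map_sampling hr0 hf).limUnder_eq.symm⟩

/-- For `d ≥ 1`, `0 ≤ r < 1` and a locally constant distribution `μ` on
`ℤ_p^d` with growth bounded by `r` (i.e. `‖μ(1_{a + p^m ℤ_p^d})‖ ≤ p^{r·m - C}` for some `C`),
there is a unique continuous `E`-linear functional on `C^r(ℤ_p^d, E)` extending `μ`. -/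
theorem stmt5 (p : ℕ) [Fact p.Prime] (E : Type*) [NormedField E] [CompleteSpace E]
    [IsUltrametricDist E] [Algebra ℚ_[p] E] [FiniteDimensional ℚ_[p] E]
    (hE : ∀ x : ℚ_[p], ‖algebraMap ℚ_[p] E x‖ = ‖x‖)
    (d : ℕ) (hd : 1 ≤ d) (r : ℝ) (hr0 : 0 ≤ r) (hr1 : r < 1)
    (μ : LocallyConstant (Fin d → ℤ_[p]) E →ₗ[E] E)
    (C : ℝ)
    (hgrowth : ∀ (m : ℕ) (a : Fin d → ℤ_[p]) (g : LocallyConstant (Fin d → ℤ_[p]) E),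
      ⇑g = Set.indicator
          {x : Fin d → ℤ_[p] | ∃ z : Fin d → ℤ_[p], x = a + (p : ℤ_[p]) ^ m • z}
          (fun _ => (1 : E)) →
      ‖μ g‖ ≤ (p : ℝ) ^ (r * (m : ℝ) - C)) :
    ∃ Φ : ((Fin d → ℤ_[p]) → E) → E, IsCrExtension E r μ Φ ∧
      ∀ Φ' : ((Fin d → ℤ_[p]) → E) → E, IsCrExtension E r μ Φ' →
        ∀ f : (Fin d → ℤ_[p]) → E, MemCr E r f → Φ' f = Φ f :=
  stmt5_general p E d r hr0 μ C hgrowth
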